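/- arXiv:1301.6453 — 3 statements merged into one kernel-verified Lean document; each statement's English description precedes it below -/
import Mathlib

section
/- Let F be a field and M ≥ 1 an integer. Define the system matrix Q ∈ F^{(2M−1)×(2M−1)} as the block matrix [[I_M, Q12],[Q21, I_{M−1}]]. Then the matrices I_M − Q12·Q21 and I_{M−1} − Q21·Q12 are invertible, and choosing M1 = (I_M − Q12·Q21)^{-1} and M2 = −(I_{M−1} − Q21·Q12)^{-1}, the product Q · blockdiag(M1, M2) · Q equals the block-diagonal matrix blockdiag(I_M, −I_{M−1}). (This is Lemma 1 of the paper: the chosen finite-field precoding matrices M1, M2 at the relays make the end-to-end system matrix diagonal.) -/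
/-!
With the signature matrix `J = blockdiag(1, -1)`, the off-diagonal blocks of `Q J Q` cancel:
`Q J Q = blockdiag(1 - Q12 Q21, -(1 - Q21 Q12))`. So the precoder `blockdiag(M1, M2)` is
`(Q J Q)⁻¹ = Q⁻¹ J⁻¹ Q⁻¹`, and sandwiching it between two copies of `Q` leaves `J⁻¹ = J`.
Invertibility holds because `Q12 Q21` is the lower shift, so `1 - Q12 Q21` is unitriangular, and
`det (1 - Q21 Q12) = det (1 - Q12 Q21)`.
-/

open Matrix

/-- `Q12 ∈ F^{M×(M−1)}`: a zero row on top of the identity matrix `I_{M−1}`. -/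
def Q12 (F : Type*) [Semiring F] (M : ℕ) : Matrix (Fin M) (Fin (M - 1)) F :=
  fun i j => if (i : ℕ) = (j : ℕ) + 1 then 1 else 0

/-- `Q21 ∈ F^{(M−1)×M}`: the identity matrix `I_{M−1}` followed by a zero column. -/
def Q21 (F : Type*) [Semiring F] (M : ℕ) : Matrix (Fin (M - 1)) (Fin M) F :=
  fun i j => if (i : ℕ) = (j : ℕ) then 1 else 0

section BlockMatrices

variable {m n R : Type*} [Fintype m] [Fintype n] [DecidableEq m] [DecidableEq n]

theorem fromBlocks_one_mul_signature_mul_self [Ring R] (A : Matrix m n R) (B : Matrix n m R) :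
    fromBlocks 1 A B 1 * fromBlocks 1 0 0 (-1) * fromBlocks 1 A B 1 =
      fromBlocks (1 - A * B) 0 0 (-(1 - B * A)) := by
  simp [fromBlocks_multiply, sub_eq_add_neg]

variable [CommRing R]

theorem inv_signature :
    (fromBlocks 1 0 0 (-1) : Matrix (m ⊕ n) (m ⊕ n) R)⁻¹ = fromBlocks 1 0 0 (-1) :=
  inv_eq_right_inv (by simp [fromBlocks_multiply])

theorem mul_inv_mul_mul_mul_cancel {A : Matrix n n R} (hA : IsUnit A) (J : Matrix n n R) :
    A * (A * J * A)⁻¹ * A = J⁻¹ := by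
  have hdet : IsUnit A.det := (isUnit_iff_isUnit_det A).mp hA
  rw [Matrix.mul_inv_rev, Matrix.mul_inv_rev, mul_nonsing_inv_cancel_left _ _ hdet,
    nonsing_inv_mul_cancel_right _ _ hdet]

theorem isUnit_one_sub_mul_comm (A : Matrix m n R) (B : Matrix n m R) :
    IsUnit (1 - A * B) ↔ IsUnit (1 - B * A) := by
  rw [isUnit_iff_isUnit_det, isUnit_iff_isUnit_det, det_one_sub_mul_comm]

theorem isUnit_fromBlocks_one_iff (A : Matrix m n R) (B : Matrix n m R) :
    IsUnit (fromBlocks 1 A B 1) ↔ IsUnit (1 - A * B) := by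
  rw [isUnit_iff_isUnit_det, det_fromBlocks_one₂₂, ← isUnit_iff_isUnit_det]

theorem fromBlocks_one_mul_inv_mul_self {A : Matrix m n R} {B : Matrix n m R}
    (h : IsUnit (1 - A * B)) :
    fromBlocks 1 A B 1 * fromBlocks (1 - A * B)⁻¹ 0 0 (-(1 - B * A)⁻¹) * fromBlocks 1 A B 1 =
      fromBlocks 1 0 0 (-1) := by
  have h' : IsUnit (1 - B * A) := (isUnit_one_sub_mul_comm A B).mp h
  have hinv : (fromBlocks 1 A B 1 * fromBlocks 1 0 0 (-1) * fromBlocks 1 A B 1)⁻¹ =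
      fromBlocks (1 - A * B)⁻¹ 0 0 (-(1 - B * A)⁻¹) := by
    rw [fromBlocks_one_mul_signature_mul_self]
    refine inv_eq_right_inv ?_
    simp only [fromBlocks_multiply, Matrix.mul_zero, Matrix.zero_mul, add_zero, zero_add,
      neg_mul_neg, mul_nonsing_inv _ ((isUnit_iff_isUnit_det _).mp h),
      mul_nonsing_inv _ ((isUnit_iff_isUnit_det _).mp h'), fromBlocks_one]
  rw [← hinv, mul_inv_mul_mul_mul_cancel ((isUnit_fromBlocks_one_iff A B).mpr h), inv_signature]

theorem det_one_sub_of_strictly_lower_triangular [LinearOrder n] {N : Matrix n n R}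
    (hN : ∀ ⦃i j⦄, i ≤ j → N i j = 0) : (1 - N).det = 1 := by
  have hlower : (1 - N).IsLowerTriangular := fun i j (hij : i < j) ↦ by
    rw [Matrix.sub_apply, one_apply_ne hij.ne, hN hij.le, sub_zero]
  rw [det_of_isLowerTriangular _ hlower]
  exact Finset.prod_eq_one fun i _ ↦ by rw [Matrix.sub_apply, one_apply_eq, hN le_rfl, sub_zero]

end BlockMatrices

theorem Q12_mul_Q21_apply (R : Type*) [Semiring R] (M : ℕ) (i j : Fin M) :
    (Q12 R M * Q21 R M) i j = if (i : ℕ) = j + 1 then 1 else 0 := by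
  simp only [mul_apply, Q12, Q21, mul_ite, mul_one, mul_zero]
  by_cases hij : (i : ℕ) = j + 1
  · have hj : (j : ℕ) < M - 1 := by omega
    rw [if_pos hij, Finset.sum_eq_single ⟨j, hj⟩]
    · rw [if_pos rfl, if_pos hij]
    · intro k _ hk
      exact if_neg fun hkj ↦ hk (Fin.ext hkj)
    · exact fun hmem ↦ absurd (Finset.mem_univ _) hmem
  · rw [if_neg hij]
    refine Finset.sum_eq_zero fun k _ ↦ ?_
    split_ifs with hkj hik
    · exact absurd (hkj ▸ hik) hij
    · rfl
    · rfl

theorem isUnit_one_sub_Q12_mul_Q21 (R : Type*) [CommRing R] (M : ℕ) :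
    IsUnit (1 - Q12 R M * Q21 R M) := by
  have hdet : (1 - Q12 R M * Q21 R M).det = 1 :=
    det_one_sub_of_strictly_lower_triangular fun i j hij ↦ by
      rw [Q12_mul_Q21_apply, if_neg (by omega)]
  rw [isUnit_iff_isUnit_det, hdet]
  exact isUnit_one

theorem stmt_0_general (R : Type*) [CommRing R] (n : ℕ) :
    IsUnit (1 - Q12 R (n + 1) * Q21 R (n + 1)) ∧
    IsUnit (1 - Q21 R (n + 1) * Q12 R (n + 1)) ∧
    fromBlocks 1 (Q12 R (n + 1)) (Q21 R (n + 1)) 1 *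
        fromBlocks (1 - Q12 R (n + 1) * Q21 R (n + 1))⁻¹ 0 0
          (-(1 - Q21 R (n + 1) * Q12 R (n + 1))⁻¹) *
        fromBlocks 1 (Q12 R (n + 1)) (Q21 R (n + 1)) 1 =
      fromBlocks 1 0 0 (-1) := by
  have h := isUnit_one_sub_Q12_mul_Q21 R (n + 1)
  exact ⟨h, (isUnit_one_sub_mul_comm _ _).mp h, fromBlocks_one_mul_inv_mul_self h⟩

/-- Lemma 1: the matrices `I_M − Q12·Q21` and `I_{M−1} − Q21·Q12` are invertible, and
with `M1 = (I_M − Q12·Q21)⁻¹`, `M2 = −(I_{M−1} − Q21·Q12)⁻¹`, the end-to-end system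
matrix `Q · blockdiag(M1, M2) · Q` equals `blockdiag(I_M, −I_{M−1})`. -/
theorem stmt_0 (F : Type*) [Field F] (M : ℕ) (hM : 1 ≤ M) :
    IsUnit ((1 : Matrix (Fin M) (Fin M) F) - Q12 F M * Q21 F M) ∧
    IsUnit ((1 : Matrix (Fin (M - 1)) (Fin (M - 1)) F) - Q21 F M * Q12 F M) ∧
    (fromBlocks (1 : Matrix (Fin M) (Fin M) F) (Q12 F M) (Q21 F M) 1) *
        (fromBlocks ((1 - Q12 F M * Q21 F M)⁻¹) 0 0 (-(1 - Q21 F M * Q12 F M)⁻¹)) *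
        (fromBlocks 1 (Q12 F M) (Q21 F M) 1) =
      fromBlocks (1 : Matrix (Fin M) (Fin M) F) 0 0 (-1) := by
  obtain ⟨n, rfl⟩ := Nat.exists_eq_add_of_le' hM
  exact stmt_0_general F n
end

section
/- Let M, K ≥ 1, let s > 0 be a real number, let H ∈ ℂ^{M×M}, C ∈ ℂ^{M×K}, and b ∈ ℂ^M. Then the matrix s^{-1}·I_K + C^H·H^H·H·C is positive definite (hence invertible), and the minimum over α ∈ ℂ^M of the effective-noise variance s·‖C^H·(H^H·α − b)‖² + ‖α‖² is attained and equals b^H·C·(s^{-1}·I_K + C^H·H^H·H·C)^{-1}·C^H·b. (This quantity is denoted σ²(HC, b) in the paper, with s = SNR_eff.) -/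
open Matrix
open scoped ComplexOrder

/-- Squared Hermitian (Euclidean) norm of a complex vector. -/
noncomputable def hnormSq {n : ℕ} (x : Fin n → ℂ) : ℝ := ∑ i, Complex.normSq (x i)

open scoped InnerProductSpace

/-!
Put `G = H C` and `c = Cᴴ b`, so that the objective is the ridge-regression functional
`α ↦ s ‖Gᴴ α - c‖² + ‖α‖²`. Let `w` solve the normal equation `(s⁻¹ I + Gᴴ G) w = c`. Around the
point `α = G w` the residual is `Gᴴ (G w + d) - c = Gᴴ d - s⁻¹ w`, and the terms linear in `d`
cancel because `⟪w, Gᴴ d⟫ = ⟪G w, d⟫`. What remains is the constant `re ⟪c, w⟫` plus the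
nonnegative quantity `s ‖Gᴴ d‖² + ‖d‖²`.
-/

section InnerProductSpace

variable {𝕜 E F : Type*} [RCLike 𝕜] [NormedAddCommGroup E] [InnerProductSpace 𝕜 E]
  [NormedAddCommGroup F] [InnerProductSpace 𝕜 F] {T : E →ₗ[𝕜] F} {T' : F →ₗ[𝕜] E}
  {s : ℝ} {c w : E}

theorem re_inner_eq_of_normal_equation (hadj : ∀ x y, ⟪T x, y⟫_𝕜 = ⟪x, T' y⟫_𝕜)
    (hw : (s : 𝕜)⁻¹ • w + T' (T w) = c) :
    RCLike.re ⟪c, w⟫_𝕜 = s⁻¹ * ‖w‖ ^ 2 + ‖T w‖ ^ 2 := by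
  rw [← inner_re_symm, ← hw, inner_add_right, inner_smul_right, ← hadj, map_add,
    ← RCLike.ofReal_inv, RCLike.re_ofReal_mul, inner_self_eq_norm_sq, inner_self_eq_norm_sq]

theorem ridge_objective_add_eq (hadj : ∀ x y, ⟪T x, y⟫_𝕜 = ⟪x, T' y⟫_𝕜) (hs : s ≠ 0)
    (hw : (s : 𝕜)⁻¹ • w + T' (T w) = c) (d : F) :
    s * ‖T' (T w + d) - c‖ ^ 2 + ‖T w + d‖ ^ 2 =
      RCLike.re ⟪c, w⟫_𝕜 + (s * ‖T' d‖ ^ 2 + ‖d‖ ^ 2) := by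
  have residual_eq : T' (T w + d) - c = T' d - (s : 𝕜)⁻¹ • w := by
    rw [map_add, ← hw]
    abel
  have cross_eq : RCLike.re ⟪T' d, (s : 𝕜)⁻¹ • w⟫_𝕜 = s⁻¹ * RCLike.re ⟪T w, d⟫_𝕜 := by
    rw [inner_smul_right, ← RCLike.ofReal_inv, RCLike.re_ofReal_mul, inner_re_symm, hadj]
  have norm_smul_sq : ‖(s : 𝕜)⁻¹ • w‖ ^ 2 = s⁻¹ ^ 2 * ‖w‖ ^ 2 := by
    rw [norm_smul, norm_inv, RCLike.norm_ofReal, mul_pow, inv_pow, sq_abs, inv_pow]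
  rw [residual_eq, norm_sub_sq (𝕜 := 𝕜), norm_add_sq (𝕜 := 𝕜), cross_eq, norm_smul_sq,
    re_inner_eq_of_normal_equation hadj hw]
  field_simp
  ring

theorem isLeast_ridge_objective (hadj : ∀ x y, ⟪T x, y⟫_𝕜 = ⟪x, T' y⟫_𝕜) (hs : 0 < s)
    (hw : (s : 𝕜)⁻¹ • w + T' (T w) = c) :
    IsLeast (Set.range fun α ↦ s * ‖T' α - c‖ ^ 2 + ‖α‖ ^ 2) (RCLike.re ⟪c, w⟫_𝕜) := by
  constructor
  · exact ⟨T w, by simpa using ridge_objective_add_eq hadj hs.ne' hw 0⟩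
  · rintro _ ⟨α, rfl⟩
    have expansion := ridge_objective_add_eq hadj hs.ne' hw (α - T w)
    rw [add_sub_cancel] at expansion
    exact (le_add_of_nonneg_right (by positivity)).trans_eq expansion.symm

end InnerProductSpace

section Matrix

variable {𝕜 l m n : Type*} [RCLike 𝕜] [Fintype l] [DecidableEq n] {s : ℝ}

theorem posDef_inv_smul_one_add_conjTranspose_mul_self [Finite n] (hs : 0 < s)
    (G : Matrix l n 𝕜) :
    ((s : 𝕜)⁻¹ • (1 : Matrix n n 𝕜) + Gᴴ * G).PosDef :=
  (PosDef.one.smul (RCLike.inv_pos.mpr (RCLike.ofReal_pos.mpr hs))).add_posSemidef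
    (posSemidef_conjTranspose_mul_self G)

variable [Fintype n]

theorem isLeast_matrix_ridge_objective (hs : 0 < s) (G : Matrix l n 𝕜) (c : n → 𝕜) :
    IsLeast
      (Set.range fun α : l → 𝕜 ↦
        s * ‖WithLp.toLp 2 (Gᴴ *ᵥ α - c)‖ ^ 2 + ‖WithLp.toLp 2 α‖ ^ 2)
      (RCLike.re (star c ⬝ᵥ (((s : 𝕜)⁻¹ • 1 + Gᴴ * G)⁻¹ *ᵥ c))) := by
  classical
  set A : Matrix n n 𝕜 := (s : 𝕜)⁻¹ • 1 + Gᴴ * G with hA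
  have hdet : IsUnit A.det :=
    (isUnit_iff_isUnit_det A).mp (posDef_inv_smul_one_add_conjTranspose_mul_self hs G).isUnit
  have normal_equation : (s : 𝕜)⁻¹ • (A⁻¹ *ᵥ c) + Gᴴ *ᵥ (G *ᵥ (A⁻¹ *ᵥ c)) = c := by
    calc (s : 𝕜)⁻¹ • (A⁻¹ *ᵥ c) + Gᴴ *ᵥ (G *ᵥ (A⁻¹ *ᵥ c)) = A *ᵥ (A⁻¹ *ᵥ c) := by
          rw [hA, add_mulVec, smul_mulVec, one_mulVec, mulVec_mulVec _ Gᴴ G]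
      _ = c := by rw [mulVec_mulVec, mul_nonsing_inv A hdet, one_mulVec]
  have hadj (x : EuclideanSpace 𝕜 n) (y : EuclideanSpace 𝕜 l) :
      ⟪toEuclideanLin G x, y⟫_𝕜 = ⟪x, toEuclideanLin Gᴴ y⟫_𝕜 := by
    rw [toEuclideanLin_conjTranspose_eq_adjoint, LinearMap.adjoint_inner_right]
  have hleast := isLeast_ridge_objective (w := WithLp.toLp 2 (A⁻¹ *ᵥ c)) hadj hs
    (congrArg (WithLp.toLp 2) normal_equation)
  rw [EuclideanSpace.inner_toLp_toLp, dotProduct_comm] at hleast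
  rwa [← (WithLp.toLp_surjective 2).range_comp] at hleast

theorem stmt_12_general [Fintype m] (hs : 0 < s)
    (H : Matrix l m 𝕜) (C : Matrix m n 𝕜) (b : m → 𝕜) :
    ((s : 𝕜)⁻¹ • (1 : Matrix n n 𝕜) + Cᴴ * Hᴴ * H * C).PosDef ∧
    IsUnit ((s : 𝕜)⁻¹ • (1 : Matrix n n 𝕜) + Cᴴ * Hᴴ * H * C) ∧
    IsLeast
      (Set.range fun α : l → 𝕜 ↦
        s * ‖WithLp.toLp 2 (Cᴴ *ᵥ (Hᴴ *ᵥ α - b))‖ ^ 2 + ‖WithLp.toLp 2 α‖ ^ 2)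
      (RCLike.re (star b ᵥ* (C * ((s : 𝕜)⁻¹ • 1 + Cᴴ * Hᴴ * H * C)⁻¹ * Cᴴ) ⬝ᵥ b)) := by
  have gram_eq : Cᴴ * Hᴴ * H * C = (H * C)ᴴ * (H * C) := by
    rw [conjTranspose_mul, Matrix.mul_assoc]
  have residual_eq (α : l → 𝕜) : Cᴴ *ᵥ (Hᴴ *ᵥ α - b) = (H * C)ᴴ *ᵥ α - Cᴴ *ᵥ b := by
    rw [mulVec_sub, mulVec_mulVec, conjTranspose_mul]
  have quadratic_form_eq (B : Matrix n n 𝕜) :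
      star b ᵥ* (C * B * Cᴴ) ⬝ᵥ b = star (Cᴴ *ᵥ b) ⬝ᵥ (B *ᵥ (Cᴴ *ᵥ b)) := by
    rw [star_mulVec, conjTranspose_conjTranspose, dotProduct_mulVec, dotProduct_mulVec,
      vecMul_vecMul, vecMul_vecMul, Matrix.mul_assoc]
  have hpos := posDef_inv_smul_one_add_conjTranspose_mul_self hs (H * C)
  simp only [gram_eq, residual_eq, quadratic_form_eq]
  exact ⟨hpos, hpos.isUnit, isLeast_matrix_ridge_objective hs (H * C) (Cᴴ *ᵥ b)⟩

end Matrix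

theorem hnormSq_eq_norm_sq {n : ℕ} (x : Fin n → ℂ) : hnormSq x = ‖WithLp.toLp 2 x‖ ^ 2 := by
  simp only [hnormSq, EuclideanSpace.norm_sq_eq, Complex.normSq_eq_norm_sq]

/-- The matrix `s⁻¹·I_K + Cᴴ·Hᴴ·H·C` is positive definite (hence invertible), and the
minimum over `α ∈ ℂ^M` of the effective-noise variance `s·‖Cᴴ·(Hᴴ·α − b)‖² + ‖α‖²`
is attained and equals `bᴴ·C·(s⁻¹·I_K + Cᴴ·Hᴴ·H·C)⁻¹·Cᴴ·b` (the paper's `σ²(HC, b)`). -/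
theorem stmt_12 (M K : ℕ) (hM : 1 ≤ M) (hK : 1 ≤ K) (s : ℝ) (hs : 0 < s)
    (H : Matrix (Fin M) (Fin M) ℂ) (C : Matrix (Fin M) (Fin K) ℂ) (b : Fin M → ℂ) :
    (((s⁻¹ : ℂ) • (1 : Matrix (Fin K) (Fin K) ℂ) + Cᴴ * Hᴴ * H * C).PosDef) ∧
    IsUnit ((s⁻¹ : ℂ) • (1 : Matrix (Fin K) (Fin K) ℂ) + Cᴴ * Hᴴ * H * C) ∧
    IsLeast
      {x : ℝ | ∃ α : Fin M → ℂ,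
        x = s * hnormSq (Cᴴ *ᵥ (Hᴴ *ᵥ α - b)) + hnormSq α}
      (((star b) ᵥ* (C * ((s⁻¹ : ℂ) • 1 + Cᴴ * Hᴴ * H * C)⁻¹ * Cᴴ) ⬝ᵥ b).re) := by
  simpa only [hnormSq_eq_norm_sq, Set.range, eq_comm, RCLike.re_eq_complex_re,
    RCLike.ofReal_eq_complex_ofReal] using stmt_12_general hs H C b
end

section
/- Let M, K ≥ 1, s > 0, H ∈ ℂ^{M×M} invertible, C ∈ ℂ^{M×K}, and b ∈ ℂ^M. Choosing the exact integer-forcing scaling α = (H^{-1})^H·b (equivalently α^H = b^H·H^{-1}), the non-integer self-interference term vanishes: C^H·(H^H·α − b) = 0, and the effective-noise variance equals ‖(H^{-1})^H·b‖². Consequently σ²(HC, b) = b^H·C·(s^{-1}·I_K + C^H·H^H·H·C)^{-1}·C^H·b ≤ ‖(H^{-1})^H·b‖² for every s > 0. -/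
open Matrix
open scoped ComplexOrder

/-!
The noise variance `s‖Gᴴ x - c‖² + ‖x‖²` is a ridge-regression cost in the scaling `x`. If `y`
solves the regularised normal equation `s⁻¹ y + Gᴴ G y = c`, completing the square shows that the
cost exceeds `re ⟪c, y⟫` by `s‖Gᴴ x - c + s⁻¹ y‖² + ‖x - G y‖²`, so its minimum is `re ⟪c, y⟫`,
attained at `x = G y`. With `G = H C` and `c = Cᴴ b` this minimum is `σ²(HC, b)`, whereas exact
integer forcing is a choice of `x` with `Gᴴ x = c`: its cost is `‖x‖²`, which therefore bounds
`σ²(HC, b)`.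
-/

open WithLp

theorem hnormSq_eq_norm_toLp_sq {n : ℕ} (x : Fin n → ℂ) : hnormSq x = ‖toLp 2 x‖ ^ 2 := by
  simp only [hnormSq, EuclideanSpace.norm_sq_eq, Complex.normSq_eq_norm_sq]

theorem posDef_smul_one_add_conjTranspose_mul_self {𝕜 m k : Type*} [RCLike 𝕜] [Fintype m]
    [Finite k] [DecidableEq k] {r : 𝕜} (hr : 0 < r) (G : Matrix m k 𝕜) :
    (r • (1 : Matrix k k 𝕜) + Gᴴ * G).PosDef :=
  (PosDef.one.smul hr).add_posSemidef (posSemidef_conjTranspose_mul_self G)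

section RidgeRegression

variable {𝕜 m k : Type*} [RCLike 𝕜] [Fintype m] [Fintype k]

theorem inner_toLp_conjTranspose_mulVec (G : Matrix m k 𝕜) (x : m → 𝕜) (y : k → 𝕜) :
    inner 𝕜 (toLp 2 (Gᴴ *ᵥ x)) (toLp 2 y) = inner 𝕜 (toLp 2 x) (toLp 2 (G *ᵥ y)) := by
  rw [EuclideanSpace.inner_toLp_toLp, EuclideanSpace.inner_toLp_toLp, star_mulVec,
    conjTranspose_conjTranspose, dotProduct_comm y, dotProduct_comm _ (star x), dotProduct_mulVec]

/-- The cost `s‖Gᴴ x - c‖² + ‖x‖²` of Tikhonov-regularised least squares. The effective-noise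
variance `s‖Cᴴ(Hᴴ α - b)‖² + ‖α‖²` of the receiver is the case `G = H C`, `c = Cᴴ b`, `x = α`. -/
noncomputable def ridgeCost (s : ℝ) (G : Matrix m k 𝕜) (c : k → 𝕜) (x : m → 𝕜) : ℝ :=
  s * ‖toLp 2 (Gᴴ *ᵥ x - c)‖ ^ 2 + ‖toLp 2 x‖ ^ 2

theorem ridgeCost_of_conjTranspose_mulVec_eq (s : ℝ) {G : Matrix m k 𝕜} {c : k → 𝕜} {x : m → 𝕜}
    (hx : Gᴴ *ᵥ x = c) : ridgeCost s G c x = ‖toLp 2 x‖ ^ 2 := by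
  simp [ridgeCost, hx]

theorem re_inner_eq_of_normal_equation_s13 {s : ℝ} {G : Matrix m k 𝕜} {c y : k → 𝕜}
    (hy : (s : 𝕜)⁻¹ • y + Gᴴ *ᵥ (G *ᵥ y) = c) :
    RCLike.re (inner 𝕜 (toLp 2 c) (toLp 2 y)) =
      s⁻¹ * ‖toLp 2 y‖ ^ 2 + ‖toLp 2 (G *ᵥ y)‖ ^ 2 := by
  rw [← hy, toLp_add, inner_add_left, inner_toLp_conjTranspose_mulVec, toLp_smul,
    inner_smul_left, map_add, inner_self_eq_norm_sq, ← RCLike.ofReal_inv, RCLike.conj_ofReal,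
    RCLike.re_ofReal_mul, inner_self_eq_norm_sq]

theorem ridgeCost_eq_re_inner_add_sq {s : ℝ} (hs : s ≠ 0) {G : Matrix m k 𝕜} {c y : k → 𝕜}
    (hy : (s : 𝕜)⁻¹ • y + Gᴴ *ᵥ (G *ᵥ y) = c) (x : m → 𝕜) :
    ridgeCost s G c x = RCLike.re (inner 𝕜 (toLp 2 c) (toLp 2 y)) +
      (s * ‖toLp 2 (Gᴴ *ᵥ x - c + (s : 𝕜)⁻¹ • y)‖ ^ 2 + ‖toLp 2 (x - G *ᵥ y)‖ ^ 2) := by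
  have h_cross : RCLike.re (inner 𝕜 (toLp 2 (Gᴴ *ᵥ x - c)) (toLp 2 y)) =
      RCLike.re (inner 𝕜 (toLp 2 x) (toLp 2 (G *ᵥ y))) -
        RCLike.re (inner 𝕜 (toLp 2 c) (toLp 2 y)) := by
    rw [toLp_sub, inner_sub_left, inner_toLp_conjTranspose_mulVec, map_sub]
  have h_residual : s * ‖toLp 2 (Gᴴ *ᵥ x - c + (s : 𝕜)⁻¹ • y)‖ ^ 2 =
      s * ‖toLp 2 (Gᴴ *ᵥ x - c)‖ ^ 2
        + 2 * RCLike.re (inner 𝕜 (toLp 2 (Gᴴ *ᵥ x - c)) (toLp 2 y)) + s⁻¹ * ‖toLp 2 y‖ ^ 2 := by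
    rw [toLp_add, toLp_smul, norm_add_sq (𝕜 := 𝕜), inner_smul_right, norm_smul, mul_pow,
      ← RCLike.ofReal_inv, RCLike.re_ofReal_mul, RCLike.norm_ofReal, sq_abs]
    field_simp
  have h_deviation : ‖toLp 2 (x - G *ᵥ y)‖ ^ 2 = ‖toLp 2 x‖ ^ 2
      - 2 * RCLike.re (inner 𝕜 (toLp 2 x) (toLp 2 (G *ᵥ y))) + ‖toLp 2 (G *ᵥ y)‖ ^ 2 := by
    rw [toLp_sub, norm_sub_sq (𝕜 := 𝕜)]
  rw [ridgeCost, h_residual, h_deviation, h_cross]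
  linarith only [re_inner_eq_of_normal_equation_s13 hy]

theorem isLeast_range_ridgeCost_of_normal_equation {s : ℝ} (hs : 0 < s) {G : Matrix m k 𝕜}
    {c y : k → 𝕜} (hy : (s : 𝕜)⁻¹ • y + Gᴴ *ᵥ (G *ᵥ y) = c) :
    IsLeast (Set.range (ridgeCost s G c)) (RCLike.re (inner 𝕜 (toLp 2 c) (toLp 2 y))) := by
  constructor
  · refine ⟨G *ᵥ y, ?_⟩
    have h_residual : Gᴴ *ᵥ (G *ᵥ y) - c + (s : 𝕜)⁻¹ • y = 0 := by
      rw [← hy]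
      abel
    rw [ridgeCost_eq_re_inner_add_sq hs.ne' hy, h_residual]
    simp
  · rintro _ ⟨x, rfl⟩
    rw [ridgeCost_eq_re_inner_add_sq hs.ne' hy]
    exact le_add_of_nonneg_right (by positivity)

theorem smul_add_conjTranspose_mulVec_ridge_inv_mulVec [DecidableEq k] {r : 𝕜} (hr : 0 < r)
    (G : Matrix m k 𝕜) (c : k → 𝕜) :
    r • ((r • 1 + Gᴴ * G)⁻¹ *ᵥ c) + Gᴴ *ᵥ (G *ᵥ ((r • 1 + Gᴴ * G)⁻¹ *ᵥ c)) = c := by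
  have h_det : IsUnit (r • (1 : Matrix k k 𝕜) + Gᴴ * G).det :=
    (isUnit_iff_isUnit_det _).1 (posDef_smul_one_add_conjTranspose_mul_self hr G).isUnit
  calc _ = (r • 1 + Gᴴ * G) *ᵥ ((r • 1 + Gᴴ * G)⁻¹ *ᵥ c) := by
        rw [add_mulVec, smul_mulVec, one_mulVec, mulVec_mulVec _ Gᴴ G]
    _ = c := by rw [mulVec_mulVec, mul_nonsing_inv _ h_det, one_mulVec]

theorem isLeast_range_ridgeCost [DecidableEq k] {s : ℝ} (hs : 0 < s) (G : Matrix m k 𝕜)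
    (c : k → 𝕜) : IsLeast (Set.range (ridgeCost s G c))
      (RCLike.re (star c ⬝ᵥ (((s : 𝕜)⁻¹ • 1 + Gᴴ * G)⁻¹ *ᵥ c))) := by
  have hs_inv : (0 : 𝕜) < (s : 𝕜)⁻¹ := inv_pos.2 (RCLike.ofReal_pos.2 hs)
  rw [dotProduct_comm, ← EuclideanSpace.inner_toLp_toLp]
  exact isLeast_range_ridgeCost_of_normal_equation hs
    (smul_add_conjTranspose_mulVec_ridge_inv_mulVec hs_inv G c)

end RidgeRegression

theorem conjTranspose_mulVec_conjTranspose_mulVec_of_mul_eq_one {R m n : Type*} [Semiring R]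
    [StarRing R] [Fintype m] [Fintype n] [DecidableEq n] {L : Matrix n m R} {H : Matrix m n R}
    (hLH : L * H = 1) (b : n → R) : Hᴴ *ᵥ (Lᴴ *ᵥ b) = b := by
  rw [mulVec_mulVec, ← conjTranspose_mul, hLH, conjTranspose_one, one_mulVec]

theorem star_vecMul_mul_conjTranspose_dotProduct {R n k : Type*} [Semiring R] [StarRing R]
    [Fintype n] [Fintype k] (C : Matrix n k R) (Q : Matrix k k R) (b : n → R) :
    (star b) ᵥ* (C * Q * Cᴴ) ⬝ᵥ b = star (Cᴴ *ᵥ b) ⬝ᵥ (Q *ᵥ (Cᴴ *ᵥ b)) := by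
  rw [star_mulVec, conjTranspose_conjTranspose, ← dotProduct_mulVec, ← dotProduct_mulVec]
  simp only [mulVec_mulVec, Matrix.mul_assoc]

theorem stmt_13_general {𝕜 m n k : Type*} [RCLike 𝕜] [Fintype m] [Fintype n] [Fintype k]
    [DecidableEq n] [DecidableEq k] {s : ℝ} (hs : 0 < s) {H : Matrix m n 𝕜} {L : Matrix n m 𝕜}
    (hLH : L * H = 1) (C : Matrix n k 𝕜) (b : n → 𝕜) :
    Cᴴ *ᵥ (Hᴴ *ᵥ (Lᴴ *ᵥ b) - b) = 0 ∧
    s * ‖toLp 2 (Cᴴ *ᵥ (Hᴴ *ᵥ (Lᴴ *ᵥ b) - b))‖ ^ 2 + ‖toLp 2 (Lᴴ *ᵥ b)‖ ^ 2 =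
      ‖toLp 2 (Lᴴ *ᵥ b)‖ ^ 2 ∧
    RCLike.re ((star b) ᵥ* (C * ((s : 𝕜)⁻¹ • 1 + Cᴴ * Hᴴ * H * C)⁻¹ * Cᴴ) ⬝ᵥ b) ≤
      ‖toLp 2 (Lᴴ *ᵥ b)‖ ^ 2 := by
  have h_forcing : Hᴴ *ᵥ (Lᴴ *ᵥ b) = b :=
    conjTranspose_mulVec_conjTranspose_mulVec_of_mul_eq_one hLH b
  have h_interference : Cᴴ *ᵥ (Hᴴ *ᵥ (Lᴴ *ᵥ b) - b) = 0 := by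
    rw [h_forcing, sub_self, mulVec_zero]
  have h_channel : (H * C)ᴴ *ᵥ (Lᴴ *ᵥ b) = Cᴴ *ᵥ b := by
    rw [conjTranspose_mul, ← mulVec_mulVec, h_forcing]
  have h_gram : Cᴴ * Hᴴ * H * C = (H * C)ᴴ * (H * C) := by
    rw [conjTranspose_mul, Matrix.mul_assoc (Cᴴ * Hᴴ)]
  refine ⟨h_interference, by rw [h_interference]; simp, ?_⟩
  rw [h_gram, star_vecMul_mul_conjTranspose_dotProduct,
    ← ridgeCost_of_conjTranspose_mulVec_eq s h_channel]
  exact (isLeast_range_ridgeCost hs (H * C) (Cᴴ *ᵥ b)).2 ⟨Lᴴ *ᵥ b, rfl⟩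

/-- Exact integer forcing: with `α = (H⁻¹)ᴴ·b` the non-integer self-interference
vanishes, the effective-noise variance equals `‖(H⁻¹)ᴴ·b‖²`, and consequently
`σ²(HC, b) = bᴴ·C·(s⁻¹·I_K + Cᴴ·Hᴴ·H·C)⁻¹·Cᴴ·b ≤ ‖(H⁻¹)ᴴ·b‖²` for every `s > 0`. -/
theorem stmt_13 (M K : ℕ) (hM : 1 ≤ M) (hK : 1 ≤ K) (s : ℝ) (hs : 0 < s)
    (H : Matrix (Fin M) (Fin M) ℂ) (hH : IsUnit H)
    (C : Matrix (Fin M) (Fin K) ℂ) (b : Fin M → ℂ) :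
    Cᴴ *ᵥ (Hᴴ *ᵥ ((H⁻¹)ᴴ *ᵥ b) - b) = 0 ∧
    s * hnormSq (Cᴴ *ᵥ (Hᴴ *ᵥ ((H⁻¹)ᴴ *ᵥ b) - b)) + hnormSq ((H⁻¹)ᴴ *ᵥ b) =
      hnormSq ((H⁻¹)ᴴ *ᵥ b) ∧
    ((star b) ᵥ* (C * ((s⁻¹ : ℂ) • 1 + Cᴴ * Hᴴ * H * C)⁻¹ * Cᴴ) ⬝ᵥ b).re ≤
      hnormSq ((H⁻¹)ᴴ *ᵥ b) := by
  have h_left_inv : H⁻¹ * H = 1 := nonsing_inv_mul H ((isUnit_iff_isUnit_det H).1 hH)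
  simp only [hnormSq_eq_norm_toLp_sq]
  exact stmt_13_general hs h_left_inv C b
end
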